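/- For every real number $r > 0$ and every natural number $n$, $\int_{(n+1+r)/r}^{(n+2+r)/r} (u-1)^{n+1}\, u^{-n-r-2}\, du < \frac{r^r (n+1)^{n+1}}{(n+r+1)^{n+r+2}}$. -/

import Mathlib

open Real intervalIntegral

/-!
Write `m = n + 1`. By weighted AM-GM, `(u - 1) ^ m * u ^ (-m - r)` is at most
`K = r ^ r * m ^ m / (m + r) ^ (m + r)`, with equality at the lower endpoint `u = (m + r) / r`.
The integrand is therefore at most `K / u`. The ratio of the endpoints is `1 + 1 / (m + r)`, so the
integral is at most `K * log (1 + 1 / (m + r)) < K / (m + r)`.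
-/

lemma rpow_self_pos {x : ℝ} (hx : 0 ≤ x) : 0 < x ^ x := by
  rcases hx.eq_or_lt with rfl | hx
  · simp
  · exact rpow_pos_of_pos hx x

lemma rpow_mul_rpow_le_mul_add_div_add_rpow {a b p q : ℝ} (ha : 0 ≤ a) (hb : 0 ≤ b)
    (hp : 0 ≤ p) (hq : 0 ≤ q) :
    a ^ p * b ^ q ≤ p ^ p * q ^ q * ((a + b) / (p + q)) ^ (p + q) := by
  have hpp : 0 < p ^ p := rpow_self_pos hp
  have hqq : 0 < q ^ q := rpow_self_pos hq
  rcases (add_nonneg hp hq).eq_or_lt with hpq | hpq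
  · obtain ⟨rfl, rfl⟩ := (add_eq_zero_iff_of_nonneg hp hq).1 hpq.symm
    simp
  have amgm : (a / p) ^ (p / (p + q)) * (b / q) ^ (q / (p + q)) ≤ (a + b) / (p + q) := by
    calc (a / p) ^ (p / (p + q)) * (b / q) ^ (q / (p + q))
        ≤ p / (p + q) * (a / p) + q / (p + q) * (b / q) :=
          geom_mean_le_arith_mean2_weighted (by positivity) (by positivity) (by positivity)
            (by positivity) (by field_simp)
      _ = (a / p * p + b / q * q) / (p + q) := by ring
      _ ≤ (a + b) / (p + q) := by
          -- only an inequality because `p` or `q` may vanish, and `a / 0 * 0 = 0`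
          gcongr
          · exact mul_le_of_le_div₀ ha hp le_rfl
          · exact mul_le_of_le_div₀ hb hq le_rfl
  have amgm_rpow : (a / p) ^ p * (b / q) ^ q ≤ ((a + b) / (p + q)) ^ (p + q) := by
    have h := rpow_le_rpow (by positivity) amgm hpq.le
    rwa [mul_rpow (by positivity) (by positivity), ← rpow_mul (by positivity),
      ← rpow_mul (by positivity), div_mul_cancel₀ _ hpq.ne', div_mul_cancel₀ _ hpq.ne'] at h
  calc a ^ p * b ^ q = p ^ p * q ^ q * ((a / p) ^ p * (b / q) ^ q) := by
        rw [div_rpow ha hp, div_rpow hb hq]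
        field_simp
    _ ≤ p ^ p * q ^ q * ((a + b) / (p + q)) ^ (p + q) := by gcongr

lemma sub_one_rpow_mul_rpow_le {m r u : ℝ} (hm : 0 ≤ m) (hr : 0 ≤ r) (hu : 1 ≤ u) :
    (u - 1) ^ m * u ^ (-m - r) ≤ r ^ r * m ^ m / (m + r) ^ (m + r) := by
  have hu0 : 0 < u := by linarith
  have amgm : (u - 1) ^ m ≤ m ^ m * r ^ r * (u / (m + r)) ^ (m + r) := by
    simpa using rpow_mul_rpow_le_mul_add_div_add_rpow (sub_nonneg.2 hu) zero_le_one hm hr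
  calc (u - 1) ^ m * u ^ (-m - r) = (u - 1) ^ m / u ^ (m + r) := by
        rw [← neg_add', rpow_neg hu0.le, div_eq_mul_inv]
    _ ≤ m ^ m * r ^ r * (u / (m + r)) ^ (m + r) / u ^ (m + r) := by gcongr
    _ = r ^ r * m ^ m / (m + r) ^ (m + r) := by
        rw [div_rpow hu0.le (add_nonneg hm hr)]
        field_simp

lemma integral_sub_one_rpow_mul_rpow_le {m r a b : ℝ} (hm : 0 ≤ m) (hr : 0 ≤ r)
    (ha : 1 ≤ a) (hab : a ≤ b) :
    ∫ u in a..b, (u - 1) ^ m * u ^ (-m - r - 1)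
      ≤ r ^ r * m ^ m / (m + r) ^ (m + r) * log (b / a) := by
  have ha0 : 0 < a := by linarith
  have hpos : ∀ u ∈ Set.Icc a b, 0 < u := fun u hu => ha0.trans_le hu.1
  have hcont : ContinuousOn (fun u : ℝ => (u - 1) ^ m * u ^ (-m - r - 1)) (Set.Icc a b) :=
    ((continuousOn_id.sub continuousOn_const).rpow_const fun _ _ => .inr hm).mul
      (continuousOn_id.rpow_const fun u hu => .inl (hpos u hu).ne')
  have hinv : ContinuousOn (fun u : ℝ => u⁻¹) (Set.Icc a b) :=
    continuousOn_id.inv₀ fun u hu => (hpos u hu).ne'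
  have hbound : ∀ u ∈ Set.Icc a b,
      (u - 1) ^ m * u ^ (-m - r - 1) ≤ r ^ r * m ^ m / (m + r) ^ (m + r) * u⁻¹ := by
    intro u hu
    have hu0 := hpos u hu
    rw [rpow_sub_one hu0.ne', div_eq_mul_inv, ← mul_assoc]
    gcongr
    exact sub_one_rpow_mul_rpow_le hm hr (ha.trans hu.1)
  calc ∫ u in a..b, (u - 1) ^ m * u ^ (-m - r - 1)
      ≤ ∫ u in a..b, r ^ r * m ^ m / (m + r) ^ (m + r) * u⁻¹ :=
        integral_mono_on hab (hcont.intervalIntegrable_of_Icc hab)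
          ((hinv.intervalIntegrable_of_Icc hab).const_mul _) hbound
    _ = r ^ r * m ^ m / (m + r) ^ (m + r) * log (b / a) := by
        rw [integral_const_mul, integral_inv_of_pos ha0 (ha0.trans_le hab)]

theorem integral_lt_general {m r : ℝ} (hm : 0 ≤ m) (hr : 0 < r) :
    ∫ u in ((m + r) / r)..((m + r + 1) / r), (u - 1) ^ m * u ^ (-m - r - 1)
      < r ^ r * m ^ m / (m + r) ^ (m + r + 1) := by
  have hmr : 0 < m + r := by positivity
  have ha : 1 ≤ (m + r) / r := by rw [one_le_div hr]; linarith
  have hab : (m + r) / r ≤ (m + r + 1) / r := by gcongr ?_ / r; linarith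
  have hratio : (m + r + 1) / r / ((m + r) / r) = 1 + 1 / (m + r) := by field_simp
  have hlog : log (1 + 1 / (m + r)) < 1 / (m + r) := by
    have hinv : 0 < 1 / (m + r) := by positivity
    linarith [log_lt_sub_one_of_pos (x := 1 + 1 / (m + r)) (by positivity) (by linarith)]
  have hmm : 0 < m ^ m := rpow_self_pos hm
  calc ∫ u in ((m + r) / r)..((m + r + 1) / r), (u - 1) ^ m * u ^ (-m - r - 1)
      ≤ r ^ r * m ^ m / (m + r) ^ (m + r) * log (1 + 1 / (m + r)) :=
        hratio ▸ integral_sub_one_rpow_mul_rpow_le hm hr.le ha hab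
    _ < r ^ r * m ^ m / (m + r) ^ (m + r) * (1 / (m + r)) := by gcongr
    _ = r ^ r * m ^ m / (m + r) ^ (m + r + 1) := by
        rw [rpow_add_one hmr.ne', div_mul_div_comm, mul_one]

/-- For real `r > 0` and `n ∈ ℕ`,
`∫_{(n+1+r)/r}^{(n+2+r)/r} (u-1)^{n+1} u^{-n-r-2} du < r^r (n+1)^{n+1} / (n+r+1)^{n+r+2}`. -/
theorem integral_lt (r : ℝ) (hr : 0 < r) (n : ℕ) :
    (∫ u in ((n + 1 + r) / r)..((n + 2 + r) / r), (u - 1) ^ (n + 1) * u ^ (-(n : ℝ) - r - 2))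
      < r ^ r * (n + 1 : ℝ) ^ (n + 1) / (n + r + 1) ^ ((n : ℝ) + r + 2) := by
  have h := integral_lt_general (m := (n + 1 : ℕ)) (Nat.cast_nonneg _) hr
  simp_rw [rpow_natCast] at h
  convert h using 3 <;> push_cast <;> ring_nf
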